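/- Let E be a nonempty standard Borel space, d ≥ 1, and Ω = E^{ℤ^d} with the product σ-algebra ℱ. Then there exists a countable core 𝒞 of (Ω,ℱ) that is translation invariant, i.e. θ_jA ∈ 𝒞 for every A ∈ 𝒞 and every j ∈ ℤ^d. -/

import Mathlib

open MeasureTheory Filter Topology
open scoped ENNReal NNReal

namespace GibbsMeta

/-- The shift `θ_j` on configurations `ω ∈ E^{ℤᵈ}`: `(θ_jω)_i = ω_{i-j}`. -/
def shift {E : Type*} {d : ℕ} (j : Fin d → ℤ) (ω : (Fin d → ℤ) → E) : (Fin d → ℤ) → E :=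
  fun i => ω (i - j)

/-- A countable core of a measurable space: a countable, intersection-stable generator
`𝒞` of the σ-algebra such that convergence of probability measures on all sets of `𝒞`
determines a unique limiting probability measure. -/
def IsCore {Ω' : Type*} [m : MeasurableSpace Ω'] (𝒞 : Set (Set Ω')) : Prop :=
  𝒞.Countable ∧ (∀ A ∈ 𝒞, MeasurableSet A) ∧ (∀ A ∈ 𝒞, ∀ B ∈ 𝒞, A ∩ B ∈ 𝒞) ∧
  MeasurableSpace.generateFrom 𝒞 = m ∧
  ∀ μs : ℕ → Measure Ω', (∀ n, IsProbabilityMeasure (μs n)) →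
    (∀ A ∈ 𝒞, ∃ L : ℝ≥0∞, Tendsto (fun n => μs n A) atTop (𝓝 L)) →
    ∃! μ : Measure Ω', IsProbabilityMeasure μ ∧
      ∀ A ∈ 𝒞, Tendsto (fun n => μs n A) atTop (𝓝 (μ A))

/-- Transport of a profinite second countable topology along a measurable equivalence. -/
theorem nice_of_equiv {E X : Type*} [m : MeasurableSpace E] [tX : TopologicalSpace X]
    [mX : MeasurableSpace X] [BorelSpace X] [CompactSpace X] [T2Space X]
    [SecondCountableTopology X] [TotallyDisconnectedSpace X] (e : E ≃ᵐ X) :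
    ∃ _ : TopologicalSpace E, BorelSpace E ∧ CompactSpace E ∧ T2Space E ∧
      SecondCountableTopology E ∧ TotallyDisconnectedSpace E := by
  let t : TopologicalSpace E := TopologicalSpace.induced e tX
  let h : E ≃ₜ X := e.toEquiv.toHomeomorphOfIsInducing ⟨rfl⟩
  refine ⟨t, ⟨?_⟩, h.symm.compactSpace, h.symm.t2Space, h.secondCountableTopology, ?_⟩
  · rw [borel_comap, ← BorelSpace.measurable_eq (α := X)]
    exact e.measurableEmbedding.comap_eq.symm
  · exact h.symm.totallyDisconnectedSpace

/-- Monotone `0`-`1` sequences: a countable infinite closed subset of the Cantor space. -/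
theorem mono_countable : Countable {x : ℕ → Bool // Monotone x} := by
  classical
  let f : {x : ℕ → Bool // Monotone x} → Option ℕ := fun x =>
    if h : ∃ n, x.1 n = true then some (Nat.find h) else none
  have key : ∀ (x : {x : ℕ → Bool // Monotone x}) (k : ℕ),
      x.1 k = true ↔ ∃ n, f x = some n ∧ n ≤ k := by
    intro x k
    constructor
    · intro hk
      have h : ∃ n, x.1 n = true := ⟨k, hk⟩
      exact ⟨Nat.find h, by simp [f, h], Nat.find_min' h hk⟩
    · rintro ⟨n, hn, hnk⟩
      by_cases h : ∃ n, x.1 n = true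
      · simp only [f, dif_pos h, Option.some.injEq] at hn
        have h1 := Nat.find_spec h
        rw [hn] at h1
        have h2 := x.2 hnk
        rw [h1] at h2
        exact top_le_iff.mp h2
      · simp [f, h] at hn
  have hf : Function.Injective f := by
    intro x y hxy
    apply Subtype.ext
    funext k
    rw [Bool.eq_iff_iff, key x, key y, hxy]
  exact hf.countable

theorem mono_infinite : Infinite {x : ℕ → Bool // Monotone x} := by
  refine Infinite.of_injective
    (fun n : ℕ => (⟨fun k => decide (n ≤ k), ?_⟩ : {x : ℕ → Bool // Monotone x})) ?_
  · intro a b hab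
    rw [Bool.le_iff_imp]
    simp only [decide_eq_true_eq]
    omega
  · intro a b hab
    have h := congrArg Subtype.val hab
    have h1 := congrFun h a
    have h2 := congrFun h b
    simp at h1 h2
    omega

theorem mono_closed : IsClosed {x : ℕ → Bool | Monotone x} := by
  have : {x : ℕ → Bool | Monotone x} = ⋂ a, ⋂ b, ⋂ _ : a ≤ b, {x : ℕ → Bool | x a ≤ x b} := by
    ext x
    simp [Monotone]
  rw [this]
  refine isClosed_iInter fun a => isClosed_iInter fun b => isClosed_iInter fun _ => ?_
  have hcont : Continuous (fun x : ℕ → Bool => (x a, x b)) := by fun_prop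
  exact (isClosed_discrete {p : Bool × Bool | p.1 ≤ p.2}).preimage hcont

/-- Every standard Borel space carries a profinite second countable topology. -/
theorem exists_nice (E : Type*) [MeasurableSpace E] [StandardBorelSpace E] :
    ∃ _ : TopologicalSpace E, BorelSpace E ∧ CompactSpace E ∧ T2Space E ∧
      SecondCountableTopology E ∧ TotallyDisconnectedSpace E := by
  by_cases hc : Countable E
  · rcases finite_or_infinite E with hf | hi
    · let t : TopologicalSpace E := ⊥
      have : DiscreteTopology E := ⟨rfl⟩
      exact ⟨t, inferInstance, inferInstance, inferInstance, inferInstance, inferInstance⟩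
    · have := mono_countable
      have := mono_infinite
      have : CompactSpace {x : ℕ → Bool // Monotone x} :=
        isCompact_iff_compactSpace.mp mono_closed.isCompact
      have : StandardBorelSpace {x : ℕ → Bool // Monotone x} :=
        mono_closed.measurableSet.standardBorel
      have : SecondCountableTopology {x : ℕ → Bool // Monotone x} :=
        TopologicalSpace.Subtype.secondCountableTopology {x : ℕ → Bool | Monotone x}
      obtain ⟨e⟩ := nonempty_equiv_of_countable (α := E) (β := {x : ℕ → Bool // Monotone x})
      exact nice_of_equiv (PolishSpace.Equiv.measurableEquiv e)
  · exact nice_of_equiv (PolishSpace.measurableEquivNatBoolOfNotCountable hc)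

/-- The clopen sets of a profinite second countable space form a core. -/
theorem isCore_clopen {X : Type*} [TopologicalSpace X] [m : MeasurableSpace X] [BorelSpace X]
    [CompactSpace X] [T2Space X] [SecondCountableTopology X] [TotallyDisconnectedSpace X] :
    IsCore {s : Set X | IsClopen s} := by
  have hcount : {s : Set X | IsClopen s}.Countable := by
    have : Countable (TopologicalSpace.Clopens X) :=
      TopologicalSpace.Clopens.countable_iff_secondCountable.mpr inferInstance
    refine (Set.countable_range (fun s : TopologicalSpace.Clopens X => (s : Set X))).mono ?_
    intro s hs
    exact ⟨⟨s, hs⟩, rfl⟩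
  have hgen : MeasurableSpace.generateFrom {s : Set X | IsClopen s} = m := by
    rw [BorelSpace.measurable_eq (α := X)]
    exact (isTopologicalBasis_isClopen.borel_eq_generateFrom).symm
  refine ⟨hcount, fun A hA => hA.isOpen.measurableSet, fun A hA B hB => IsClopen.inter hA hB,
    hgen, ?_⟩
  intro μs hμs hlim
  let : MetricSpace X := TopologicalSpace.metrizableSpaceMetric X
  let P : ℕ → ProbabilityMeasure X := fun n => ⟨μs n, hμs n⟩
  let U : Ultrafilter ℕ := Ultrafilter.of atTop
  have hU : (U : Filter ℕ) ≤ atTop := Ultrafilter.of_le atTop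
  obtain ⟨μ, -, hμ⟩ := isCompact_univ.ultrafilter_le_nhds (U.map P) (by simp)
  have hμ' : Tendsto P U (𝓝 μ) := hμ
  have hconv : ∀ A ∈ {s : Set X | IsClopen s},
      Tendsto (fun n => μs n A) atTop (𝓝 ((μ : Measure X) A)) := by
    intro A hA
    obtain ⟨L, hL⟩ := hlim A hA
    have h1 := ProbabilityMeasure.tendsto_measure_of_null_frontier_of_tendsto' hμ' (E := A)
      (by rw [IsClopen.frontier_eq hA]; simp)
    have h2 : L = (μ : Measure X) A := tendsto_nhds_unique (hL.mono_left hU) h1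
    rw [← h2]
    exact hL
  refine ⟨μ, ⟨inferInstance, hconv⟩, ?_⟩
  rintro ν ⟨hν, hνc⟩
  refine MeasureTheory.ext_of_generate_finite {s : Set X | IsClopen s} hgen.symm
    (fun A hA B hB _ => IsClopen.inter hA hB)
    (fun A hA => tendsto_nhds_unique (hνc A hA) (hconv A hA)) (by simp)

/-- **Existence of a translation-invariant countable core.** For a nonempty standard
Borel space `E` and `d ≥ 1`, the product space `Ω = E^{ℤᵈ}` admits a countable core
that is invariant under all shifts `θ_j`, `j ∈ ℤᵈ`. -/
theorem exists_shift_invariant_countable_core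
    (E : Type*) [MeasurableSpace E] [StandardBorelSpace E] [Nonempty E]
    (d : ℕ) (hd : 1 ≤ d) :
    ∃ 𝒞 : Set (Set ((Fin d → ℤ) → E)),
      IsCore 𝒞 ∧ ∀ A ∈ 𝒞, ∀ j : Fin d → ℤ, shift j '' A ∈ 𝒞 := by
  obtain ⟨t, _, _, _, _, _⟩ := exists_nice E
  refine ⟨{s | IsClopen s}, isCore_clopen, ?_⟩
  intro A hA j
  have himg : shift j '' A = shift (-j) ⁻¹' A := by
    ext ω
    constructor
    · rintro ⟨η, hη, rfl⟩
      have : shift (-j) (shift j η) = η := by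
        funext i
        simp [shift]
      rwa [Set.mem_preimage, this]
    · intro h
      refine ⟨_, h, ?_⟩
      funext i
      simp [shift]
  rw [himg]
  refine IsClopen.preimage hA ?_
  unfold shift
  fun_prop

end GibbsMeta
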